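/- arXiv:2507.19444 — 4 statements merged into one kernel-verified Lean document; each statement's English description precedes it below -/
import Mathlib

section
/- Let a > 0 and let f ∈ L¹_loc(ℝ³) be such that for almost every x ∈ ℝ³ the map y ↦ f(y)/|x − y| is integrable on ℝ³. Then the convolution 𝒦_a * f, defined for almost every x by (𝒦_a * f)(x) = ∫_{ℝ³} 𝒦_a(x−y) f(y) dy (the integral being absolutely convergent for a.e. x), belongs to L¹_loc(ℝ³). -/
/-!
The kernel satisfies both `𝒦_a(z) ≤ 1/(4π|z|)` and `𝒦_a(z) ≤ 1/(4πa)`. Fix one point `x₀` at which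
`y ↦ f(y)/|x₀ - y|` is integrable. Since `|x₀ - y| ≤ |x - y| + |x - x₀|`, the two bounds combine to
`𝒦_a(x - y) |x₀ - y| ≤ (1 + M/a)/(4π)` whenever `|x - x₀| ≤ M` (`BPkernel_mul_norm_le`). So on every
ball around `x₀` the integrands `𝒦_a(x - y) f(y)` are dominated by one multiple of
`|f(y)|/|x₀ - y|`. Hence the convolution integral converges absolutely for every `x`, and by
dominated convergence it is a continuous function of `x`, in particular locally integrable.
-/

open MeasureTheory Real Filter Topology

/-- The Bopp–Podolsky kernel `𝒦_a(x) = (1 - e^{-|x|/a})/(4π|x|)` on `ℝ³`. -/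
noncomputable def BPkernel (a : ℝ) (x : EuclideanSpace ℝ (Fin 3)) : ℝ :=
  (1 - Real.exp (-‖x‖ / a)) / (4 * Real.pi * ‖x‖)

lemma BPkernel_nonneg {a : ℝ} (ha : 0 < a) (z : EuclideanSpace ℝ (Fin 3)) :
    0 ≤ BPkernel a z := by
  unfold BPkernel
  have h : Real.exp (-‖z‖ / a) ≤ 1 := by
    rw [Real.exp_le_one_iff, neg_div]
    have : 0 ≤ ‖z‖ / a := by positivity
    linarith
  exact div_nonneg (by linarith) (by positivity)

lemma BPkernel_mul_norm_add_le {a : ℝ} (ha : 0 < a) {M : ℝ} (hM : 0 ≤ M)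
    (z : EuclideanSpace ℝ (Fin 3)) :
    BPkernel a z * (‖z‖ + M) ≤ (1 + M / a) / (4 * Real.pi) := by
  rcases (norm_nonneg z).eq_or_lt with h0 | hr
  · rw [BPkernel, ← h0]
    simp only [mul_zero, div_zero, zero_mul]
    positivity
  · unfold BPkernel
    rw [div_mul_eq_mul_div, div_le_div_iff₀ (by positivity) (by positivity)]
    have h1 := Real.add_one_le_exp (-‖z‖ / a)
    have h2 := Real.exp_pos (-‖z‖ / a)
    rw [neg_div] at h1 h2 ⊢
    have key : (1 - Real.exp (-(‖z‖ / a))) * (‖z‖ + M) ≤ (1 + M / a) * ‖z‖ := by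
      have e1 : (1 - Real.exp (-(‖z‖ / a))) * ‖z‖ ≤ 1 * ‖z‖ :=
        mul_le_mul_of_nonneg_right (by linarith) hr.le
      have e2 : (1 - Real.exp (-(‖z‖ / a))) * M ≤ (‖z‖ / a) * M :=
        mul_le_mul_of_nonneg_right (by linarith) hM
      have e3 : (‖z‖ / a) * M = M / a * ‖z‖ := by ring
      linarith
    nlinarith [mul_le_mul_of_nonneg_right key (by positivity : 0 ≤ 4 * Real.pi)]

lemma BPkernel_mul_norm_le {a : ℝ} (ha : 0 < a) {M : ℝ}
    {x x₀ : EuclideanSpace ℝ (Fin 3)} (hx : ‖x - x₀‖ ≤ M) (y : EuclideanSpace ℝ (Fin 3)) :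
    BPkernel a (x - y) * ‖x₀ - y‖ ≤ (1 + M / a) / (4 * Real.pi) := by
  refine le_trans (mul_le_mul_of_nonneg_left ?_ (BPkernel_nonneg ha _))
    (BPkernel_mul_norm_add_le ha ((norm_nonneg _).trans hx) (x - y))
  have h := norm_sub_le (x - y) (x - x₀)
  rw [sub_sub_sub_cancel_left] at h
  linarith

/-- The domination valid uniformly for `x` in a ball around `x₀`. The point `y = x₀` is excluded
because there the right-hand side takes the junk value `0`. -/
lemma norm_BPkernel_mul_le {a : ℝ} (ha : 0 < a) {M : ℝ}
    {x x₀ : EuclideanSpace ℝ (Fin 3)} (hx : ‖x - x₀‖ ≤ M)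
    (f : EuclideanSpace ℝ (Fin 3) → ℝ) {y : EuclideanSpace ℝ (Fin 3)} (hy : y ≠ x₀) :
    ‖BPkernel a (x - y) * f y‖ ≤ (1 + M / a) / (4 * Real.pi) * ‖f y / ‖x₀ - y‖‖ := by
  have hpos : 0 < ‖x₀ - y‖ := norm_pos_iff.mpr (sub_ne_zero.mpr hy.symm)
  rw [norm_mul, norm_div, norm_norm, Real.norm_of_nonneg (BPkernel_nonneg ha _)]
  calc BPkernel a (x - y) * ‖f y‖
      = BPkernel a (x - y) * ‖x₀ - y‖ * (‖f y‖ / ‖x₀ - y‖) := by field_simp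
    _ ≤ _ := mul_le_mul_of_nonneg_right (BPkernel_mul_norm_le ha hx y) (by positivity)

lemma measurable_BPkernel (a : ℝ) : Measurable (BPkernel a) := by
  unfold BPkernel
  fun_prop

/-- At `0` the definition of `BPkernel` takes the junk value `0` and continuity fails. -/
lemma continuousAt_BPkernel (a : ℝ) {z : EuclideanSpace ℝ (Fin 3)} (hz : z ≠ 0) :
    ContinuousAt (BPkernel a) z := by
  unfold BPkernel
  have : 4 * Real.pi * ‖z‖ ≠ 0 := by positivity
  exact ContinuousAt.div (by fun_prop) (by fun_prop) this

/-- If `f ∈ L¹_loc(ℝ³)` and for a.e. `x` the map `y ↦ f(y)/|x-y|` is integrable,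
then `𝒦_a * f` is defined a.e. (the defining integral converges absolutely for a.e. `x`)
and `𝒦_a * f ∈ L¹_loc(ℝ³)`. -/
theorem bpKernel_conv_locallyIntegrable (a : ℝ) (ha : 0 < a)
    (f : EuclideanSpace ℝ (Fin 3) → ℝ) (hf : LocallyIntegrable f volume)
    (hint : ∀ᵐ x ∂(volume : Measure (EuclideanSpace ℝ (Fin 3))),
      Integrable (fun y => f y / ‖x - y‖) volume) :
    (∀ᵐ x ∂(volume : Measure (EuclideanSpace ℝ (Fin 3))),
      Integrable (fun y => BPkernel a (x - y) * f y) volume) ∧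
    LocallyIntegrable (fun x => ∫ y, BPkernel a (x - y) * f y) volume := by
  obtain ⟨x₀, hx₀⟩ := hint.exists
  have hne (p : EuclideanSpace ℝ (Fin 3)) :
      ∀ᵐ y ∂(volume : Measure (EuclideanSpace ℝ (Fin 3))), y ≠ p :=
    Measure.ae_ne volume p
  have hmeas (x : EuclideanSpace ℝ (Fin 3)) :
      AEStronglyMeasurable (fun y => BPkernel a (x - y) * f y) volume :=
    ((measurable_BPkernel a).comp (measurable_const.sub measurable_id)).aestronglyMeasurable.mul
      hf.aestronglyMeasurable
  refine ⟨Eventually.of_forall fun x => ?_, Continuous.locallyIntegrable ?_⟩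
  · refine (hx₀.norm.const_mul ((1 + ‖x - x₀‖ / a) / (4 * Real.pi))).mono' (hmeas x) ?_
    filter_upwards [hne x₀] with y hy using norm_BPkernel_mul_le ha le_rfl f hy
  · refine continuous_iff_continuousAt.mpr fun x => ?_
    refine continuousAt_of_dominated (Eventually.of_forall hmeas) ?_
      (hx₀.norm.const_mul ((1 + (‖x - x₀‖ + 1) / a) / (4 * Real.pi))) ?_
    · have hnear : ∀ᶠ x' in 𝓝 x, ‖x' - x₀‖ < ‖x - x₀‖ + 1 :=
        ContinuousAt.eventually_lt (f := fun x' => ‖x' - x₀‖) (by fun_prop)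
          continuousAt_const (lt_add_one _)
      filter_upwards [hnear] with x' hx'
      filter_upwards [hne x₀] with y hy using norm_BPkernel_mul_le ha hx'.le f hy
    · filter_upwards [hne x] with y hy
      have h : ContinuousAt (fun x' => BPkernel a (x' - y)) x :=
        ContinuousAt.comp (g := BPkernel a) (f := fun x' => x' - y)
          (continuousAt_BPkernel a (sub_ne_zero.mpr hy.symm)) (by fun_prop)
      exact h.mul continuousAt_const
end

section
/- Let a > 0. For every y ∈ ℝ³, the translated kernel 𝒦_a(· − y) is a distributional solution of −Δφ + a²Δ²φ = δ_y; that is, for every smooth compactly supported function ψ : ℝ³ → ℝ one has ∫_{ℝ³} 𝒦_a(x − y) (−Δψ(x) + a² Δ²ψ(x)) dx = ψ(y), where Δψ denotes the Laplacian of ψ and Δ²ψ = Δ(Δψ). -/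
/-!
Write `F_b(x) = e^{-b|x|}/|x|`, so that `4π 𝒦_a = F_0 - F_{1/a}`. Everything follows from the
single identity `ΔF_b = b² F_b - 4π δ_0` for `b ≥ 0` (`integral_yukawa_lap`), applied with `b = 0`
to `ψ` and `Δψ`, and with `b = 1/a` to `Δψ`: the terms `a² Δψ(0)` and the integrals of
`F_{1/a} Δψ` cancel, and `ψ(0)` remains. A general `y` is reached by translation.

The identity for `F_b` comes in two steps.

* Moving one derivative off `ψ`: `∫ F_b Δψ = ∫ (b|x| + 1) e^{-b|x|} |x|⁻³ (x · ∇ψ) dx`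
  (`integral_kernel_lap_eq_flux`). To avoid the singularity, `|x|` is replaced by
  `√(|x|² + δ)`, the smooth functions are integrated by parts coordinatewise
  (`regularized_identity`), and `δ → 0` by dominated convergence; the dominating functions are
  `|x|⁻²` times a compactly supported continuous function, integrable in dimension three.
* Radial integration (`integral_flux_sub`): in polar coordinates the integrand of
  `∫ [(b|x| + 1) e^{-b|x|} |x|⁻³ (x · ∇ψ) - b² F_b ψ]`, including the Jacobian `r²`, is
  exactly `d/dr [(b r + 1) e^{-b r} ψ(r ω)]`. Each ray therefore contributes `-ψ(0)`, and the
  sphere has area `4π`.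
-/

open MeasureTheory Real Filter Topology

/-- The Laplacian of a function `ψ : ℝ³ → ℝ`, expressed via second derivatives along
the standard orthonormal basis. -/
noncomputable def lap (ψ : EuclideanSpace ℝ (Fin 3) → ℝ) (x : EuclideanSpace ℝ (Fin 3)) : ℝ :=
  ∑ i : Fin 3,
    iteratedFDeriv ℝ 2 ψ x ![EuclideanSpace.single i (1 : ℝ), EuclideanSpace.single i (1 : ℝ)]

/-! ### Polar coordinates and integrability -/

local notation "E3" => EuclideanSpace ℝ (Fin 3)

lemma measureReal_toSphere_univ : (volume : Measure E3).toSphere.real Set.univ = 4 * π := by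
  rw [Measure.toSphere_real_apply_univ, Measure.real, EuclideanSpace.volume_ball_fin_three]
  simp [ENNReal.toReal_ofReal (by positivity : 0 ≤ π * 4 / 3)]
  ring

/-- Integration in polar coordinates on `ℝ³`. -/
lemma integral_polar {f : E3 → ℝ} (hf : Integrable f) :
    ∫ x, f x = ∫ ω : Metric.sphere (0 : E3) 1, (∫ r in Set.Ioi (0 : ℝ), r ^ 2 * f (r • (ω : E3)))
      ∂(volume : Measure E3).toSphere := by
  have hmp := (volume : Measure E3).measurePreserving_homeomorphUnitSphereProd
  have hemb := (homeomorphUnitSphereProd E3).measurableEmbedding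
  have hsub : ∀ x : ({0}ᶜ : Set E3), f x =
      (fun p : Metric.sphere (0 : E3) 1 × Set.Ioi (0 : ℝ) => f ((p.2 : ℝ) • (p.1 : E3)))
        (homeomorphUnitSphereProd E3 x) := by
    intro x
    have hx : ‖(x : E3)‖ ≠ 0 := norm_ne_zero_iff.2 x.2
    simp [smul_smul, hx]
  have hint : Integrable
      (fun p : Metric.sphere (0 : E3) 1 × Set.Ioi (0 : ℝ) => f ((p.2 : ℝ) • (p.1 : E3)))
      ((volume : Measure E3).toSphere.prod (.volumeIoiPow (Module.finrank ℝ E3 - 1))) := by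
    rw [← hmp.integrable_comp_emb hemb]
    have h1 : IntegrableOn f ({0}ᶜ : Set E3) := hf.integrableOn
    rw [integrableOn_iff_comap_subtypeVal (measurableSet_singleton _).compl] at h1
    exact h1.congr (.of_forall hsub)
  calc
    ∫ x, f x = ∫ x : ({0}ᶜ : Set E3), f x
          ∂((volume : Measure E3).comap Subtype.val) := by
      rw [integral_subtype_comap (measurableSet_singleton _).compl f, restrict_compl_singleton]
    _ = ∫ p, f ((p.2 : ℝ) • (p.1 : E3))
          ∂((volume : Measure E3).toSphere.prod (.volumeIoiPow (Module.finrank ℝ E3 - 1))) := by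
      rw [← hmp.integral_comp hemb]
      exact integral_congr_ae (.of_forall hsub)
    _ = _ := by
      rw [integral_prod _ hint]
      refine integral_congr_ae (.of_forall fun ω => ?_)
      simp only [Measure.volumeIoiPow, ENNReal.ofReal]
      rw [integral_withDensity_eq_integral_smul,
        integral_subtype_comap measurableSet_Ioi fun r : ℝ ↦
          Real.toNNReal (r ^ (Module.finrank ℝ E3 - 1)) • f (r • (ω : E3)),
        setIntegral_congr_fun measurableSet_Ioi fun r hr ↦ ?_]
      · rw [NNReal.smul_def, Real.coe_toNNReal _ (pow_nonneg (Set.mem_Ioi.1 hr).le _)]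
        simp
      · exact (measurable_subtype_coe.pow_const _).real_toNNReal

lemma integrable_inv_sq_mul {g : E3 → ℝ} (hg : Continuous g) (hc : HasCompactSupport g) :
    Integrable (fun x : E3 => ‖x‖⁻¹ ^ 2 * g x) := by
  obtain ⟨R, hR⟩ := hc.isCompact.isBounded.subset_ball (0 : E3)
  obtain ⟨C, hC⟩ := hg.bounded_above_of_compact_support hc
  have h1 : IntegrableOn (fun x : E3 => ‖x‖⁻¹ ^ 2) (Metric.ball (0 : E3) R) := by
    rw [integrableOn_fun_norm_addHaar volume (f := fun r : ℝ => r⁻¹ ^ 2)]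
    refine (integrableOn_const (C := (1 : ℝ)) (by simp)).congr_fun ?_ measurableSet_Ioo
    intro r hr
    have : r ≠ 0 := hr.1.ne'
    simp
    field_simp
  have h2 : IntegrableOn (fun x : E3 => ‖x‖⁻¹ ^ 2 * g x) (Metric.ball (0 : E3) R) :=
    h1.mul_bdd hg.aestronglyMeasurable (.of_forall hC)
  rwa [integrableOn_iff_integrable_of_support_subset] at h2
  intro x hx
  exact hR (subset_tsupport _ (right_ne_zero_of_mul hx))

lemma integrable_fun_sub {f g : E3 → ℝ} (hf : Integrable f) (hg : Integrable g) :
    Integrable fun x => f x - g x := hf.sub hg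

lemma integrable_of_bound {k g : E3 → ℝ} (hk : Measurable k) (hg : Continuous g)
    (hc : HasCompactSupport g) (h : ∀ x, |k x| ≤ ‖x‖⁻¹ ^ 2 * g x) : Integrable k :=
  (integrable_inv_sq_mul hg hc).mono' hk.aestronglyMeasurable (.of_forall h)

/-! ### The Laplacian on test functions -/

lemma lap_eq {ψ : E3 → ℝ} (hψ : ContDiff ℝ (⊤ : ℕ∞) ψ) (x : E3) :
    lap ψ x = ∑ i : Fin 3, fderiv ℝ (fun z => fderiv ℝ ψ z (EuclideanSpace.single i 1)) x
      (EuclideanSpace.single i 1) := by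
  unfold lap
  refine Finset.sum_congr rfl fun i _ => ?_
  have hd : DifferentiableAt ℝ (fderiv ℝ ψ) x :=
    ((hψ.fderiv_right (m := 1) (by norm_cast)).differentiable (by simp)).differentiableAt
  rw [iteratedFDeriv_two_apply, fderiv_clm_apply hd (by fun_prop)]
  simp

lemma contDiff_lap {ψ : E3 → ℝ} (hψ : ContDiff ℝ (⊤ : ℕ∞) ψ) :
    ContDiff ℝ (⊤ : ℕ∞) (lap ψ) := by
  have h1 : ∀ {φ : E3 → ℝ}, ContDiff ℝ (⊤ : ℕ∞) φ → ∀ v : E3,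
      ContDiff ℝ (⊤ : ℕ∞) (fun z => fderiv ℝ φ z v) := fun h v =>
    (h.fderiv_right (m := (⊤ : ℕ∞)) (by norm_cast)).clm_apply contDiff_const
  rw [funext (lap_eq hψ)]
  exact ContDiff.sum fun i _ => h1 (h1 hψ _) _

lemma hasCompactSupport_lap {ψ : E3 → ℝ} (hc : HasCompactSupport ψ) : HasCompactSupport (lap ψ) := by
  refine hc.mono' (fun x hx => ?_)
  by_contra hx'
  apply hx
  have : iteratedFDeriv ℝ 2 ψ x = 0 := by
    by_contra h
    exact hx' (support_iteratedFDeriv_subset (𝕜 := ℝ) 2 h)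
  simp [lap, this]

/-! ### Moving one derivative onto the kernel -/

/-- The gradient of the regularization of `e^{-b|x|}/|x|` in which `|x|` becomes `√(|x|² + δ)`. -/
lemma hasFDerivAt_reg (b : ℝ) {δ : ℝ} (hδ : 0 < δ) (x : E3) :
    HasFDerivAt (fun z : E3 => Real.exp (-(b * √(‖z‖ ^ 2 + δ))) / √(‖z‖ ^ 2 + δ))
      ((-((b * √(‖x‖ ^ 2 + δ) + 1) * Real.exp (-(b * √(‖x‖ ^ 2 + δ))) /
        √(‖x‖ ^ 2 + δ) ^ 3)) • innerSL ℝ x) x := by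
  have ht : 0 < ‖x‖ ^ 2 + δ := by positivity
  have hs : 0 < √(‖x‖ ^ 2 + δ) := Real.sqrt_pos.2 ht
  have hS : HasDerivAt (fun t : ℝ => √t) (1 / (2 * √(‖x‖ ^ 2 + δ))) (‖x‖ ^ 2 + δ) :=
    Real.hasDerivAt_sqrt ht.ne'
  have hG := ((hS.const_mul b).neg.exp.div hS hs.ne')
  have hN : HasFDerivAt (fun z : E3 => ‖z‖ ^ 2 + δ) (2 • innerSL ℝ x) x := by
    have := (hasFDerivAt_id x).norm_sq.add_const δ
    simpa using this
  have := hG.comp_hasFDerivAt x hN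
  refine this.congr_fderiv ?_
  ext v
  simp
  field_simp
  ring

/-- Integration by parts for the regularized kernel, in which `|x|` becomes `√(|x|² + δ)`. -/
lemma regularized_identity (b : ℝ) {δ : ℝ} (hδ : 0 < δ) {ψ : E3 → ℝ}
    (hψ : ContDiff ℝ (⊤ : ℕ∞) ψ) (hc : HasCompactSupport ψ) :
    ∫ x, Real.exp (-(b * √(‖x‖ ^ 2 + δ))) / √(‖x‖ ^ 2 + δ) * lap ψ x =
      ∫ x, (b * √(‖x‖ ^ 2 + δ) + 1) * Real.exp (-(b * √(‖x‖ ^ 2 + δ))) /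
        √(‖x‖ ^ 2 + δ) ^ 3 * fderiv ℝ ψ x x := by
  have hpos : ∀ x : E3, √(‖x‖ ^ 2 + δ) ≠ 0 := fun x => (Real.sqrt_pos.2 (by positivity)).ne'
  set f : E3 → ℝ := fun z => Real.exp (-(b * √(‖z‖ ^ 2 + δ))) / √(‖z‖ ^ 2 + δ) with hf
  set c : E3 → ℝ := fun x => (b * √(‖x‖ ^ 2 + δ) + 1) * Real.exp (-(b * √(‖x‖ ^ 2 + δ))) /
        √(‖x‖ ^ 2 + δ) ^ 3 with hcdef
  have hfc : Continuous f := by fun_prop (disch := exact hpos _)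
  have hcc : Continuous c := by
    refine Continuous.div (by fun_prop) (by fun_prop) fun x => pow_ne_zero _ (hpos x)
  have hfd : ∀ x v, fderiv ℝ f x v = -(c x) * inner ℝ x v := fun x v => by
    rw [(hasFDerivAt_reg b hδ x).fderiv]; simp [hcdef]
  let g : Fin 3 → E3 → ℝ := fun i z => fderiv ℝ ψ z (EuclideanSpace.single i 1)
  have hg : ∀ i, ContDiff ℝ (⊤ : ℕ∞) (g i) := fun i =>
    (hψ.fderiv_right (m := (⊤ : ℕ∞)) (by norm_cast)).clm_apply contDiff_const
  have hgc : ∀ i, HasCompactSupport (g i) := fun i => hc.fderiv_apply ℝ _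
  have hdg : ∀ i, Continuous fun x => fderiv ℝ (g i) x (EuclideanSpace.single i 1) := fun i =>
    ((hg i).continuous_fderiv (by simp)).clm_apply continuous_const
  have hI1 : ∀ i, Integrable fun x => f x * fderiv ℝ (g i) x (EuclideanSpace.single i 1) :=
    fun i => (hfc.mul (hdg i)).integrable_of_hasCompactSupport
      (((hgc i).fderiv_apply ℝ _).mul_left)
  have hI2 : ∀ i, Integrable fun x => fderiv ℝ f x (EuclideanSpace.single i 1) * g i x := by
    intro i
    simp only [hfd]
    exact ((hcc.neg.mul (by fun_prop)).mul (hg i).continuous).integrable_of_hasCompactSupport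
      (hgc i).mul_left
  have key : ∀ i, ∫ x, f x * fderiv ℝ (g i) x (EuclideanSpace.single i 1) =
      ∫ x, -(fderiv ℝ f x (EuclideanSpace.single i 1) * g i x) := fun i => by
    rw [integral_neg]
    exact integral_mul_fderiv_eq_neg_fderiv_mul_of_integrable (hI2 i) (hI1 i)
      ((hfc.mul (hg i).continuous).integrable_of_hasCompactSupport (hgc i).mul_left)
      (fun x _ => (hasFDerivAt_reg b hδ x).differentiableAt)
      (fun x _ => ((hg i).differentiable (by simp)).differentiableAt)
  simp only [lap_eq hψ, Finset.mul_sum]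
  rw [integral_finsetSum _ fun i _ => hI1 i, Finset.sum_congr rfl fun i _ => key i,
    ← integral_finsetSum _ fun i _ => (hI2 i).fun_neg]
  refine integral_congr_ae (.of_forall fun x => ?_)
  have hx : x = ∑ i : Fin 3, x i • EuclideanSpace.single i (1 : ℝ) := by
    ext j; simp [Finset.sum_apply, Pi.single_apply]
  have hx' : fderiv ℝ ψ x x = ∑ i : Fin 3, x i * g i x := by
    refine (congrArg (fderiv ℝ ψ x) hx).trans ?_
    simp only [map_sum, map_smul, smul_eq_mul, g]
  simp only [hfd, hx', Finset.mul_sum]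
  refine Finset.sum_congr rfl fun i _ => ?_
  simp [EuclideanSpace.inner_single_right]
  ring

lemma one_add_mul_exp_neg_le {t : ℝ} : (t + 1) * Real.exp (-t) ≤ 1 := by
  rw [Real.exp_neg, ← div_eq_mul_inv, div_le_one (Real.exp_pos t)]
  exact Real.add_one_le_exp t

/-- The bound does not depend on `s ≥ r`; with `r = |x|` and `s = √(|x|² + δ)` it is uniform in the
regularization parameter. -/
lemma abs_kernel_le {b s r : ℝ} (hb : 0 ≤ b) (hr : 0 < r) (hs : r ≤ s) :
    |Real.exp (-(b * s)) / s| ≤ r⁻¹ := by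
  have hs0 : 0 < s := hr.trans_le hs
  rw [abs_of_pos (by positivity), ← one_div]
  gcongr
  exact Real.exp_le_one_iff.2 (by nlinarith)

/-- As for `abs_kernel_le`, the bound is uniform in `s ≥ r`. -/
lemma abs_flux_le {b s r : ℝ} (hb : 0 ≤ b) (hr : 0 < r) (hs : r ≤ s) :
    |(b * s + 1) * Real.exp (-(b * s)) / s ^ 3| ≤ r⁻¹ ^ 3 := by
  have hs0 : 0 < s := hr.trans_le hs
  rw [abs_of_pos (by positivity), inv_pow, ← one_div]
  gcongr
  exact one_add_mul_exp_neg_le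

lemma abs_flux_mul_le {b s : ℝ} (hb : 0 ≤ b) (ψ : E3 → ℝ) {x : E3} (hx : x ≠ 0) (hs : ‖x‖ ≤ s) :
    |(b * s + 1) * Real.exp (-(b * s)) / s ^ 3 * fderiv ℝ ψ x x| ≤
      ‖x‖⁻¹ ^ 2 * ‖fderiv ℝ ψ x‖ := by
  have hr : 0 < ‖x‖ := norm_pos_iff.2 hx
  rw [abs_mul]
  calc _ ≤ ‖x‖⁻¹ ^ 3 * (‖fderiv ℝ ψ x‖ * ‖x‖) :=
        mul_le_mul (abs_flux_le hb hr hs) ((fderiv ℝ ψ x).le_opNorm x) (abs_nonneg _)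
          (by positivity)
    _ = _ := by field_simp

lemma abs_kernel_mul_le {b s : ℝ} (hb : 0 ≤ b) (g : E3 → ℝ) {x : E3} (hx : x ≠ 0)
    (hs : ‖x‖ ≤ s) :
    |Real.exp (-(b * s)) / s * g x| ≤ ‖x‖⁻¹ ^ 2 * (‖x‖ * |g x|) := by
  have hr : 0 < ‖x‖ := norm_pos_iff.2 hx
  rw [abs_mul]
  calc _ ≤ ‖x‖⁻¹ * |g x| := mul_le_mul_of_nonneg_right (abs_kernel_le hb hr hs) (abs_nonneg _)
    _ = _ := by field_simp

lemma integrable_kernel_mul {b : ℝ} (hb : 0 ≤ b) {g : E3 → ℝ} (hg : Continuous g)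
    (hc : HasCompactSupport g) :
    Integrable fun x : E3 => Real.exp (-(b * ‖x‖)) / ‖x‖ * g x := by
  refine integrable_of_bound (g := fun x => ‖x‖ * |g x|) ?_ (by fun_prop) hc.abs.mul_left ?_
  · have := hg.measurable
    fun_prop
  · intro x
    by_cases hx : x = 0
    · simp [hx]
    · exact abs_kernel_mul_le hb g hx le_rfl

lemma integrable_flux_mul {b : ℝ} (hb : 0 ≤ b) {ψ : E3 → ℝ}
    (hψ : ContDiff ℝ (⊤ : ℕ∞) ψ) (hc : HasCompactSupport ψ) :
    Integrable fun x : E3 =>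
      (b * ‖x‖ + 1) * Real.exp (-(b * ‖x‖)) / ‖x‖ ^ 3 * fderiv ℝ ψ x x := by
  have hd : Continuous (fderiv ℝ ψ) := hψ.continuous_fderiv (by simp)
  refine integrable_of_bound (g := fun x => ‖fderiv ℝ ψ x‖) ?_ hd.norm (hc.fderiv ℝ).norm ?_
  · have : Measurable fun x => fderiv ℝ ψ x x := (hd.clm_apply continuous_id).measurable
    fun_prop
  · intro x
    by_cases hx : x = 0
    · simp [hx]
    · exact abs_flux_mul_le hb ψ hx le_rfl

/-- The limit `δ → 0` of `regularized_identity`. -/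
lemma integral_kernel_lap_eq_flux {b : ℝ} (hb : 0 ≤ b) {ψ : E3 → ℝ}
    (hψ : ContDiff ℝ (⊤ : ℕ∞) ψ) (hc : HasCompactSupport ψ) :
    ∫ x, Real.exp (-(b * ‖x‖)) / ‖x‖ * lap ψ x =
      ∫ x, (b * ‖x‖ + 1) * Real.exp (-(b * ‖x‖)) / ‖x‖ ^ 3 * fderiv ℝ ψ x x := by
  have hd : Continuous (fderiv ℝ ψ) := hψ.continuous_fderiv (by simp)
  have hdx : Measurable fun x => fderiv ℝ ψ x x := (hd.clm_apply continuous_id).measurable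
  have hl : Continuous (lap ψ) := (contDiff_lap hψ).continuous
  have hlm := hl.measurable
  have hlc := hasCompactSupport_lap hc
  have hne : ∀ᵐ x : E3, x ≠ 0 := by simp [ae_iff]
  have hle : ∀ (x : E3) {δ : ℝ}, 0 < δ → ‖x‖ ≤ √(‖x‖ ^ 2 + δ) := fun x δ hδ =>
    Real.le_sqrt_of_sq_le (by linarith)
  have hs : ∀ x : E3, Tendsto (fun δ : ℝ => √(‖x‖ ^ 2 + δ)) (𝓝[>] 0) (𝓝 ‖x‖) := fun x => by
    have : Continuous fun δ : ℝ => √(‖x‖ ^ 2 + δ) := by fun_prop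
    simpa using (this.tendsto 0).mono_left nhdsWithin_le_nhds
  have hpos : ∀ᶠ δ : ℝ in 𝓝[>] 0, 0 < δ := self_mem_nhdsWithin
  have h1 := tendsto_integral_filter_of_dominated_convergence (μ := (volume : Measure E3))
    (l := 𝓝[>] (0 : ℝ))
    (F := fun δ x => Real.exp (-(b * √(‖x‖ ^ 2 + δ))) / √(‖x‖ ^ 2 + δ) * lap ψ x)
    (f := fun x => Real.exp (-(b * ‖x‖)) / ‖x‖ * lap ψ x)
    (fun x => ‖x‖⁻¹ ^ 2 * (‖x‖ * |lap ψ x|))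
    (.of_forall fun δ => Measurable.aestronglyMeasurable (by fun_prop))
    (by
      filter_upwards [hpos] with δ hδ
      filter_upwards [hne] with x hx using abs_kernel_mul_le hb _ hx (hle x hδ))
    (integrable_inv_sq_mul (by fun_prop) hlc.abs.mul_left)
    (by
      filter_upwards [hne] with x hx
      exact (((hs x).const_mul b).neg.rexp.div (hs x) (norm_ne_zero_iff.2 hx)).mul_const _)
  have h2 := tendsto_integral_filter_of_dominated_convergence (μ := (volume : Measure E3))
    (l := 𝓝[>] (0 : ℝ))
    (F := fun δ x => (b * √(‖x‖ ^ 2 + δ) + 1) * Real.exp (-(b * √(‖x‖ ^ 2 + δ))) /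
        √(‖x‖ ^ 2 + δ) ^ 3 * fderiv ℝ ψ x x)
    (f := fun x => (b * ‖x‖ + 1) * Real.exp (-(b * ‖x‖)) / ‖x‖ ^ 3 * fderiv ℝ ψ x x)
    (fun x => ‖x‖⁻¹ ^ 2 * ‖fderiv ℝ ψ x‖)
    (.of_forall fun δ => Measurable.aestronglyMeasurable (by fun_prop))
    (by
      filter_upwards [hpos] with δ hδ
      filter_upwards [hne] with x hx using abs_flux_mul_le hb _ hx (hle x hδ))
    (integrable_inv_sq_mul hd.norm (hc.fderiv ℝ).norm)
    (by
      filter_upwards [hne] with x hx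
      exact (((((hs x).const_mul b).add_const 1).mul ((hs x).const_mul b).neg.rexp).div
        ((hs x).pow 3) (pow_ne_zero _ (norm_ne_zero_iff.2 hx))).mul_const _)
  refine tendsto_nhds_unique h1 (h2.congr' ?_)
  filter_upwards [hpos] with δ hδ using (regularized_identity b hδ hψ hc).symm

/-! ### Radial integration and the fundamental solutions -/

/-- Along each ray the integrand, weighted by `r²`, is the derivative of
`(b r + 1) e^{-b r} ψ(r ω)`. -/
lemma integral_flux_sub {b : ℝ} (hb : 0 ≤ b) {ψ : E3 → ℝ}
    (hψ : ContDiff ℝ (⊤ : ℕ∞) ψ) (hc : HasCompactSupport ψ) :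
    ∫ x, ((b * ‖x‖ + 1) * Real.exp (-(b * ‖x‖)) / ‖x‖ ^ 3 * fderiv ℝ ψ x x -
      b ^ 2 * (Real.exp (-(b * ‖x‖)) / ‖x‖ * ψ x)) = -(4 * π * ψ 0) := by
  rw [integral_polar (integrable_fun_sub (integrable_flux_mul hb hψ hc)
    ((integrable_kernel_mul hb hψ.continuous hc).const_mul _))]
  have inner : ∀ ω : Metric.sphere (0 : E3) 1, ∫ r in Set.Ioi (0 : ℝ), r ^ 2 *
      ((b * ‖r • (ω : E3)‖ + 1) * Real.exp (-(b * ‖r • (ω : E3)‖)) / ‖r • (ω : E3)‖ ^ 3 *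
        fderiv ℝ ψ (r • (ω : E3)) (r • (ω : E3)) -
      b ^ 2 * (Real.exp (-(b * ‖r • (ω : E3)‖)) / ‖r • (ω : E3)‖ * ψ (r • (ω : E3)))) =
      -ψ 0 := by
    intro ω
    have hω : ‖(ω : E3)‖ = 1 := by simp
    let h : ℝ → ℝ := fun r => (b * r + 1) * Real.exp (-(b * r)) * ψ (r • (ω : E3))
    have hh : ContDiff ℝ 1 h := by
      have : ContDiff ℝ 1 ψ := hψ.of_le (by norm_cast)
      fun_prop
    have hemb : Topology.IsClosedEmbedding (fun r : ℝ => r • (ω : E3)) :=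
      isClosedEmbedding_smul_left (by intro h0; simp [h0] at hω)
    have hhc : HasCompactSupport h := (hc.comp_isClosedEmbedding hemb).mul_left
    have hd := hhc.integral_Ioi_deriv_eq hh 0
    have h0 : h 0 = ψ 0 := by simp [h]
    rw [← h0, ← hd]
    refine setIntegral_congr_fun measurableSet_Ioi fun r hr => ?_
    have hr : 0 < r := hr
    have hnr : ‖r • (ω : E3)‖ = r := by rw [norm_smul, hω]; simp [hr.le]
    have e1 : HasDerivAt (fun r : ℝ => b * r) b r := by
      simpa using (hasDerivAt_id r).const_mul b
    have e2 : HasDerivAt (fun r : ℝ => r • (ω : E3)) (ω : E3) r := by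
      simpa using (hasDerivAt_id r).smul_const (ω : E3)
    have e3 : HasDerivAt (fun r : ℝ => ψ (r • (ω : E3))) (fderiv ℝ ψ (r • (ω : E3)) ω) r :=
      ((hψ.differentiable (by simp)).differentiableAt.hasFDerivAt).comp_hasDerivAt r e2
    have e4 := (((e1.add_const 1).mul e1.neg.exp).mul e3).deriv
    change _ = deriv h r
    refine Eq.trans ?_ e4.symm
    simp only [hnr, map_smul, smul_eq_mul]
    field_simp
    simp
    ring_nf
  simp only [inner]
  rw [integral_const, measureReal_toSphere_univ]
  simp

/-- `Δ (e^{-b|x|}/|x|) = b² e^{-b|x|}/|x| - 4π δ_0` in the sense of distributions, for `b ≥ 0`. -/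
lemma integral_yukawa_lap {b : ℝ} (hb : 0 ≤ b) {ψ : E3 → ℝ}
    (hψ : ContDiff ℝ (⊤ : ℕ∞) ψ) (hc : HasCompactSupport ψ) :
    ∫ x, Real.exp (-(b * ‖x‖)) / ‖x‖ * lap ψ x =
      b ^ 2 * (∫ x, Real.exp (-(b * ‖x‖)) / ‖x‖ * ψ x) - 4 * π * ψ 0 := by
  have h := integral_flux_sub hb hψ hc
  rw [integral_sub (integrable_flux_mul hb hψ hc)
    ((integrable_kernel_mul hb hψ.continuous hc).const_mul _), integral_const_mul,
    ← integral_kernel_lap_eq_flux hb hψ hc] at h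
  linarith

/-- The case `y = 0`. -/
lemma bpKernel_zero {a : ℝ} (ha : 0 < a) {ψ : E3 → ℝ}
    (hψ : ContDiff ℝ (⊤ : ℕ∞) ψ) (hψc : HasCompactSupport ψ) :
    ∫ x, BPkernel a x * (-(lap ψ x) + a ^ 2 * lap (lap ψ) x) = ψ 0 := by
  have hL := contDiff_lap hψ
  have hLc := hasCompactSupport_lap hψc
  have hLL := (contDiff_lap hL).continuous
  have hLLc := hasCompactSupport_lap hLc
  have ha' : (0 : ℝ) ≤ a⁻¹ := by positivity
  have i1 := integrable_kernel_mul le_rfl hL.continuous hLc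
  have i2 := integrable_kernel_mul le_rfl hLL hLLc
  have i3 := integrable_kernel_mul ha' hL.continuous hLc
  have i4 := integrable_kernel_mul ha' hLL hLLc
  have e1 := integral_yukawa_lap le_rfl hψ hψc
  have e2 := integral_yukawa_lap le_rfl hL hLc
  have e4 := integral_yukawa_lap ha' hL hLc
  have hsplit : ∀ x : E3, BPkernel a x * (-(lap ψ x) + a ^ 2 * lap (lap ψ) x) =
      (4 * π)⁻¹ * ((a ^ 2 * (Real.exp (-(0 * ‖x‖)) / ‖x‖ * lap (lap ψ) x) -
          Real.exp (-(0 * ‖x‖)) / ‖x‖ * lap ψ x) -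
        (a ^ 2 * (Real.exp (-(a⁻¹ * ‖x‖)) / ‖x‖ * lap (lap ψ) x) -
          Real.exp (-(a⁻¹ * ‖x‖)) / ‖x‖ * lap ψ x)) := by
    -- at `x = 0` both sides vanish, since division by zero gives zero
    intro x
    have : -‖x‖ / a = -(a⁻¹ * ‖x‖) := by field_simp
    rw [BPkernel, this]
    simp only [zero_mul, neg_zero, Real.exp_zero, div_eq_mul_inv, mul_inv]
    ring
  simp only [hsplit]
  rw [integral_const_mul, integral_sub (integrable_fun_sub (i2.const_mul _) i1)
    (integrable_fun_sub (i4.const_mul _) i3),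
    integral_sub (i2.const_mul _) i1, integral_sub (i4.const_mul _) i3,
    integral_const_mul, integral_const_mul, e1, e2, e4]
  field_simp
  ring

/-- For `a > 0` and any `y ∈ ℝ³`, the translated kernel `𝒦_a(· - y)` is a distributional
solution of `-Δφ + a²Δ²φ = δ_y`: tested against any smooth compactly supported `ψ`,
`∫ 𝒦_a(x - y)(-Δψ(x) + a²Δ²ψ(x)) dx = ψ(y)`. -/
theorem bpKernel_fundamental_solution (a : ℝ) (ha : 0 < a)
    (y : EuclideanSpace ℝ (Fin 3)) (ψ : EuclideanSpace ℝ (Fin 3) → ℝ)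
    (hψ : ContDiff ℝ (⊤ : ℕ∞) ψ) (hψc : HasCompactSupport ψ) :
    ∫ x, BPkernel a (x - y) * (-(lap ψ x) + a ^ 2 * lap (lap ψ) x) = ψ y := by
  have htr : ∀ φ : E3 → ℝ, lap (fun x => φ (x + y)) = fun x => lap φ (x + y) := fun φ => by
    funext x
    simp only [lap, iteratedFDeriv_comp_add_right]
  have h := bpKernel_zero ha (ψ := fun x => ψ (x + y)) (hψ.comp (contDiff_id.add contDiff_const))
    (hψc.comp_homeomorph (Homeomorph.addRight y))
  simp only [htr, zero_add] at h
  rw [← h, ← integral_add_right_eq_self _ y]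
  simp only [add_sub_cancel_right]
end

section
/- Let p ∈ (0,1), S > 0 and k > 0. For λ > 0 define f_λ : (0,∞) → ℝ by f_λ(t) = (1/2)t² − t⁶/(6S³) − (λ/(p+1)) k t^{p+1}, and set Λ₁ := (2(1+p)/((5−p)k)) · (3(1−p)S³/(5−p))^{(1−p)/4}. Then: (i) f_{Λ₁} attains its maximum on (0,∞) at a unique point, and this maximum value equals 0; (ii) for every λ ∈ (0, Λ₁), the supremum of f_λ on (0,∞) is strictly positive, and f_λ has exactly two zeros 0 < t* < t** in (0,∞). -/
open Real

/-!
Dividing by `t ^ (p + 1)` gives `f_λ(t) = t ^ (p + 1) * (g(t) - λ k / (p + 1))` with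
`g(t) = t ^ (1 - p) / 2 - t ^ (5 - p) / (6 S³)` (`fiber` below), so the sign of `f_λ` compares `g`
with a constant. The derivative is `t ^ (-p) * ((1 - p) / 2 - (5 - p) t⁴ / (6 S³))` at `t > 0`, so `g`
increases strictly on `[0, t₀]` and decreases strictly on `[t₀, ∞)`, where
`t₀⁴ = 3 (1 - p) S³ / (5 - p)`, and `Λ₁` is exactly the value with `g(t₀) = Λ₁ k / (p + 1)`.
For `λ = Λ₁` the only zero is therefore the maximum point `t₀`. For `0 < λ < Λ₁` the level
`λ k / (p + 1)` lies strictly between `0` and `g(t₀)`; as `g` vanishes at `0` and at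
`(3 S³) ^ (1 / 4) > t₀`, it is taken exactly once on each side of `t₀`.
-/

/-- The function `g` with `f_λ(t) = t ^ (p + 1) * (g(t) - λ k / (p + 1))` for `t > 0`. -/
noncomputable def fiber (p S t : ℝ) : ℝ := t ^ (1 - p) / 2 - t ^ (5 - p) / (6 * S ^ 3)

lemma fiber_continuous {p S : ℝ} (hp1 : p < 1) : Continuous (fiber p S) := by
  unfold fiber
  have h1 : Continuous fun t : ℝ => t ^ (1 - p) :=
    Real.continuous_rpow_const (by linarith)
  have h2 : Continuous fun t : ℝ => t ^ (5 - p) :=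
    Real.continuous_rpow_const (by linarith)
  exact (h1.div_const _).sub (h2.div_const _)

lemma fiber_zero {p S : ℝ} (hp1 : p < 1) : fiber p S 0 = 0 := by
  unfold fiber
  rw [Real.zero_rpow (by linarith), Real.zero_rpow (by linarith)]
  simp

lemma fiber_eq {p S t : ℝ} (ht : 0 < t) :
    fiber p S t = t ^ (1 - p) * (1 / 2 - t ^ 4 / (6 * S ^ 3)) := by
  have h : t ^ (5 - p) = t ^ (1 - p) * t ^ 4 := by
    rw [← Real.rpow_natCast t 4, ← Real.rpow_add ht]
    congr 1
    push_cast
    ring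
  unfold fiber
  rw [h]
  ring

lemma fiber_deriv {p S t : ℝ} (ht : 0 < t) :
    deriv (fiber p S) t = t ^ (-p) * ((1 - p) / 2 - (5 - p) * t ^ 4 / (6 * S ^ 3)) := by
  have h1 := (Real.hasDerivAt_rpow_const (x := t) (p := 1 - p) (Or.inl ht.ne')).div_const 2
  have h2 := (Real.hasDerivAt_rpow_const (x := t) (p := 5 - p) (Or.inl ht.ne')).div_const
    (6 * S ^ 3)
  have h := (h1.sub h2).deriv
  have e1 : (1 - p - 1 : ℝ) = -p := by ring
  have e2 : t ^ (5 - p - 1) = t ^ (-p) * t ^ 4 := by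
    rw [← Real.rpow_natCast t 4, ← Real.rpow_add ht]
    congr 1
    push_cast
    ring
  rw [e1, e2] at h
  refine Eq.trans h ?_
  ring

lemma fiber_strictMonoOn {p S t₀ : ℝ} (hp1 : p < 1) (hS : 0 < S)
    (h4 : t₀ ^ 4 = 3 * (1 - p) * S ^ 3 / (5 - p)) :
    StrictMonoOn (fiber p S) (Set.Icc 0 t₀) := by
  refine strictMonoOn_of_deriv_pos (convex_Icc 0 t₀) (fiber_continuous hp1).continuousOn ?_
  intro t ht
  rw [interior_Icc] at ht
  rw [fiber_deriv ht.1]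
  refine mul_pos (Real.rpow_pos_of_pos ht.1 _) ?_
  have hlt : t ^ 4 < t₀ ^ 4 := pow_lt_pow_left₀ ht.2 ht.1.le (by norm_num)
  rw [h4, lt_div_iff₀ (by linarith)] at hlt
  rw [sub_pos, div_lt_iff₀ (by positivity)]
  linarith

lemma fiber_strictAntiOn {p S t₀ : ℝ} (hp1 : p < 1) (hS : 0 < S) (h0 : 0 < t₀)
    (h4 : t₀ ^ 4 = 3 * (1 - p) * S ^ 3 / (5 - p)) :
    StrictAntiOn (fiber p S) (Set.Ici t₀) := by
  refine strictAntiOn_of_deriv_neg (convex_Ici t₀) (fiber_continuous hp1).continuousOn ?_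
  intro t ht
  rw [interior_Ici] at ht
  have ht : t₀ < t := ht
  rw [fiber_deriv (h0.trans ht)]
  refine mul_neg_of_pos_of_neg (Real.rpow_pos_of_pos (h0.trans ht) _) ?_
  have hlt : t₀ ^ 4 < t ^ 4 := pow_lt_pow_left₀ ht h0.le (by norm_num)
  rw [h4, div_lt_iff₀ (by linarith)] at hlt
  rw [sub_neg, lt_div_iff₀ (by positivity)]
  linarith

lemma fun_eq_mul_fiber {p S k lam t : ℝ} (ht : 0 < t) :
    (1 / 2) * t ^ 2 - t ^ 6 / (6 * S ^ 3) - (lam / (p + 1)) * k * t ^ (p + 1)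
      = t ^ (p + 1) * (fiber p S t - lam * k / (p + 1)) := by
  have h : t ^ (p + 1) * t ^ (1 - p) = t ^ 2 := by
    rw [← Real.rpow_natCast t 2, ← Real.rpow_add ht]
    congr 1
    push_cast
    ring
  rw [fiber_eq ht]
  linear_combination (-(1 / 2) + t ^ 4 / (6 * S ^ 3)) * h

/-- For `p ∈ (0,1)`, `S, k > 0`, consider `f_λ(t) = (1/2)t² - t⁶/(6S³) - (λ/(p+1)) k t^{p+1}`
on `(0,∞)` and `Λ₁ = (2(1+p)/((5-p)k)) (3(1-p)S³/(5-p))^{(1-p)/4}`. Then `f_{Λ₁}` attains its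
maximum on `(0,∞)` at a unique point and the maximum value is `0`; and for `0 < λ < Λ₁`,
the supremum of `f_λ` on `(0,∞)` is strictly positive and `f_λ` has exactly two zeros
`0 < t* < t**` in `(0,∞)`. -/
theorem truncation_function_structure (p S k : ℝ)
    (hp0 : 0 < p) (hp1 : p < 1) (hS : 0 < S) (hk : 0 < k) :
    let f : ℝ → ℝ → ℝ := fun lam t =>
      (1 / 2) * t ^ 2 - t ^ 6 / (6 * S ^ 3) - (lam / (p + 1)) * k * t ^ (p + 1)
    let Λ₁ : ℝ := (2 * (1 + p) / ((5 - p) * k)) * (3 * (1 - p) * S ^ 3 / (5 - p)) ^ ((1 - p) / 4)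
    (∃! t₀ : ℝ, 0 < t₀ ∧ (∀ t : ℝ, 0 < t → f Λ₁ t ≤ f Λ₁ t₀) ∧ f Λ₁ t₀ = 0) ∧
    (∀ lam : ℝ, 0 < lam → lam < Λ₁ →
      (∃ t : ℝ, 0 < t ∧ 0 < f lam t) ∧
      (∃ t₁ t₂ : ℝ, 0 < t₁ ∧ t₁ < t₂ ∧ f lam t₁ = 0 ∧ f lam t₂ = 0 ∧
        ∀ t : ℝ, 0 < t → f lam t = 0 → t = t₁ ∨ t = t₂)) := by
  intro f Λ₁
  have h5 : 0 < 5 - p := by linarith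
  have h1 : 0 < 1 - p := by linarith
  obtain ⟨A, hA⟩ : ∃ A, A = 3 * (1 - p) * S ^ 3 / (5 - p) := ⟨_, rfl⟩
  have hApos : 0 < A := by rw [hA]; positivity
  obtain ⟨t₀, ht₀⟩ : ∃ t₀, t₀ = A ^ (1 / 4 : ℝ) := ⟨_, rfl⟩
  have h0 : 0 < t₀ := by rw [ht₀]; positivity
  have h4A : t₀ ^ 4 = A := by
    rw [ht₀, ← Real.rpow_natCast, ← Real.rpow_mul hApos.le]
    norm_num
  have h4 := h4A.trans hA
  have hmono := fiber_strictMonoOn hp1 hS h4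
  have hanti := fiber_strictAntiOn hp1 hS h0 h4
  have hcont := fiber_continuous (S := S) hp1
  have hf : ∀ lam t, 0 < t → f lam t = t ^ (p + 1) * (fiber p S t - lam * k / (p + 1)) :=
    fun lam t ht => fun_eq_mul_fiber ht
  have hzero : ∀ lam t, 0 < t → (f lam t = 0 ↔ fiber p S t = lam * k / (p + 1)) := by
    intro lam t ht
    rw [hf lam t ht, mul_eq_zero, sub_eq_zero]
    exact or_iff_right (Real.rpow_pos_of_pos ht _).ne'
  have hmax : fiber p S t₀ = Λ₁ * k / (p + 1) := by
    have e : t₀ ^ (1 - p) = A ^ ((1 - p) / 4) := by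
      rw [ht₀, ← Real.rpow_mul hApos.le]
      congr 1
      ring
    rw [fiber_eq h0, e, h4]
    simp only [Λ₁]
    rw [hA]
    generalize (3 * (1 - p) * S ^ 3 / (5 - p)) ^ ((1 - p) / 4) = X
    field_simp
    ring
  have hlt : ∀ t, 0 < t → t ≠ t₀ → fiber p S t < fiber p S t₀ := by
    intro t ht hne
    rcases lt_or_gt_of_ne hne with h | h
    · exact hmono ⟨ht.le, h.le⟩ ⟨h0.le, le_rfl⟩ h
    · exact hanti (Set.mem_Ici.2 le_rfl) (Set.mem_Ici.2 h.le) h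
  have hf0 : f Λ₁ t₀ = 0 := (hzero _ _ h0).2 hmax
  refine ⟨⟨t₀, ⟨h0, ?_, hf0⟩, ?_⟩, ?_⟩
  · intro t ht
    rw [hf0, hf _ t ht]
    refine mul_nonpos_of_nonneg_of_nonpos (Real.rpow_pos_of_pos ht _).le ?_
    rw [← hmax, sub_nonpos]
    by_cases hne : t = t₀
    · rw [hne]
    · exact (hlt t ht hne).le
  · rintro t ⟨ht, -, hft⟩
    by_contra hne
    exact (hlt t ht hne).ne (((hzero _ _ ht).1 hft).trans hmax.symm)
  · intro lam hlam hlamlt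
    have hm0 : 0 < lam * k / (p + 1) := by positivity
    have hm1 : lam * k / (p + 1) < fiber p S t₀ := by
      rw [hmax]
      gcongr
    refine ⟨⟨t₀, h0, ?_⟩, ?_⟩
    · rw [hf _ _ h0]
      exact mul_pos (Real.rpow_pos_of_pos h0 _) (sub_pos.2 hm1)
    -- `T` is the positive zero of `fiber p S`, the right endpoint for the second crossing.
    obtain ⟨T, hT⟩ : ∃ T : ℝ, T = (3 * S ^ 3) ^ (1 / 4 : ℝ) := ⟨_, rfl⟩
    have hTpos : 0 < T := by rw [hT]; positivity
    have hT4 : T ^ 4 = 3 * S ^ 3 := by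
      rw [hT, ← Real.rpow_natCast, ← Real.rpow_mul (by positivity)]
      norm_num
    have hTg : fiber p S T = 0 := by
      rw [fiber_eq hTpos, hT4]
      field_simp
      norm_num
    have htT : t₀ < T := by
      refine lt_of_pow_lt_pow_left₀ 4 hTpos.le ?_
      rw [h4, hT4, div_lt_iff₀ h5]
      have : 0 < S ^ 3 := by positivity
      nlinarith
    obtain ⟨t₁, ht₁, hg₁⟩ := intermediate_value_Ioo h0.le hcont.continuousOn
      (show lam * k / (p + 1) ∈ Set.Ioo (fiber p S 0) (fiber p S t₀) from
        ⟨by rw [fiber_zero hp1]; exact hm0, hm1⟩)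
    obtain ⟨t₂, ht₂, hg₂⟩ := intermediate_value_Ioo' htT.le hcont.continuousOn
      (show lam * k / (p + 1) ∈ Set.Ioo (fiber p S T) (fiber p S t₀) from
        ⟨by rw [hTg]; exact hm0, hm1⟩)
    refine ⟨t₁, t₂, ht₁.1, ht₁.2.trans ht₂.1, (hzero _ _ ht₁.1).2 hg₁,
      (hzero _ _ (h0.trans ht₂.1)).2 hg₂, ?_⟩
    intro t ht hft
    have hg := (hzero _ _ ht).1 hft
    rcases le_total t t₀ with h | h
    · exact Or.inl (hmono.injOn ⟨ht.le, h⟩ ⟨ht₁.1.le, ht₁.2.le⟩ (hg.trans hg₁.symm))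
    · exact Or.inr (hanti.injOn (Set.mem_Ici.2 h) (Set.mem_Ici.2 ht₂.1.le) (hg.trans hg₂.symm))
end

section
/- Let (f_n) be a sequence of nonnegative locally integrable functions on ℝ³ and let f be a nonnegative locally integrable function on ℝ³ such that ∫_{ℝ³} f_n φ → ∫_{ℝ³} f φ for every continuous compactly supported function φ : ℝ³ → ℝ. Then for every R > 0, ∫_{B_R} f_n → ∫_{B_R} f. (This is the content of Lemma 3.4, applied there to f_n = |u_n|⁶ when no concentration occurs.) -/
open MeasureTheory Real Filter Topology

/-!
The sphere `|x| = R` is Lebesgue-null, so the indicator of `B_R` is, almost everywhere, the limit of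
continuous compactly supported radial ramps from below (`ballRamp R 0 k`) and from above
(`ballRamp R 1 k`). By dominated convergence (`tendsto_integral_mul_ballRamp`) the integrals of `g`
against both families tend to `∫_{B_R} g`. Since `f n ≥ 0`, the integral `∫_{B_R} f n` lies between
the integrals of `f n` against a lower and an upper ramp; for a fixed `k` these converge as
`n → ∞` by hypothesis, and choosing `k` large squeezes `∫_{B_R} f n` to `∫_{B_R} g`.
-/

/-- The radial ramp `c + (k + 1) (R - |x|)` truncated to `[0, 1]`. For `c = 0` it lies below the
indicator of the ball `B_R`, for `c = 1` above it. -/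
noncomputable def ballRamp (R c : ℝ) (k : ℕ) (x : EuclideanSpace ℝ (Fin 3)) : ℝ :=
  max 0 (min 1 (c + (k + 1) * (R - ‖x‖)))

lemma ballRamp_nonneg (R c : ℝ) (k : ℕ) (x : EuclideanSpace ℝ (Fin 3)) :
    0 ≤ ballRamp R c k x := le_max_left _ _

lemma ballRamp_le_one (R c : ℝ) (k : ℕ) (x : EuclideanSpace ℝ (Fin 3)) :
    ballRamp R c k x ≤ 1 := max_le zero_le_one (min_le_left _ _)

lemma continuous_ballRamp (R c : ℝ) (k : ℕ) : Continuous (ballRamp R c k) := by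
  unfold ballRamp
  fun_prop

lemma ballRamp_eq_zero {R c : ℝ} {k : ℕ} {x : EuclideanSpace ℝ (Fin 3)}
    (h : c + (k + 1) * (R - ‖x‖) ≤ 0) : ballRamp R c k x = 0 :=
  max_eq_left ((min_le_right _ _).trans h)

lemma ballRamp_eq_one {R c : ℝ} {k : ℕ} {x : EuclideanSpace ℝ (Fin 3)}
    (h : 1 ≤ c + (k + 1) * (R - ‖x‖)) : ballRamp R c k x = 1 := by
  simp [ballRamp, min_eq_left h]

lemma ballRamp_eq_zero_of_notMem {R c : ℝ} (hc : c ≤ 1) (k : ℕ) {x : EuclideanSpace ℝ (Fin 3)}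
    (hx : x ∉ Metric.closedBall (0 : EuclideanSpace ℝ (Fin 3)) (R + 1)) :
    ballRamp R c k x = 0 := by
  apply ballRamp_eq_zero
  simp only [Metric.mem_closedBall, dist_zero_right, not_le] at hx
  have hk : (0 : ℝ) ≤ k := k.cast_nonneg
  nlinarith

lemma hasCompactSupport_ballRamp {R c : ℝ} (hc : c ≤ 1) (k : ℕ) :
    HasCompactSupport (ballRamp R c k) :=
  HasCompactSupport.intro (isCompact_closedBall 0 (R + 1))
    fun _ hx => ballRamp_eq_zero_of_notMem hc k hx

lemma integrable_mul_ballRamp {h : EuclideanSpace ℝ (Fin 3) → ℝ} (hh : LocallyIntegrable h volume)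
    {R c : ℝ} (hc : c ≤ 1) (k : ℕ) : Integrable (fun x => h x * ballRamp R c k x) := by
  have := hh.integrable_smul_left_of_hasCompactSupport (continuous_ballRamp R c k)
    (hasCompactSupport_ballRamp hc k)
  simpa only [smul_eq_mul, mul_comm] using this

lemma integrable_indicator_ball {h : EuclideanSpace ℝ (Fin 3) → ℝ}
    (hh : LocallyIntegrable h volume) (R : ℝ) :
    Integrable ((Metric.ball (0 : EuclideanSpace ℝ (Fin 3)) R).indicator h) :=
  (integrable_indicator_iff measurableSet_ball).2
    ((hh.integrableOn_isCompact (isCompact_closedBall 0 R)).mono_set Metric.ball_subset_closedBall)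

/-- Away from the null sphere `|x| = R`, the ramps are eventually equal to the indicator of `B_R`,
whatever the offset `c`. -/
lemma tendsto_integral_mul_ballRamp {h : EuclideanSpace ℝ (Fin 3) → ℝ}
    (hh : LocallyIntegrable h volume) {R c : ℝ} (hc : c ≤ 1) :
    Tendsto (fun k => ∫ x, h x * ballRamp R c k x) atTop
      (𝓝 (∫ x in Metric.ball (0 : EuclideanSpace ℝ (Fin 3)) R, h x)) := by
  rw [← integral_indicator measurableSet_ball]
  refine tendsto_integral_of_dominated_convergence
    ((Metric.closedBall (0 : EuclideanSpace ℝ (Fin 3)) (R + 1)).indicator fun x => ‖h x‖)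
    (fun k => (integrable_mul_ballRamp hh hc k).aestronglyMeasurable)
    ((integrable_indicator_iff measurableSet_closedBall).2
      (hh.integrableOn_isCompact (isCompact_closedBall 0 (R + 1))).norm)
    (fun k => Eventually.of_forall fun x => ?_) ?_
  · by_cases hx : x ∈ Metric.closedBall (0 : EuclideanSpace ℝ (Fin 3)) (R + 1)
    · rw [Set.indicator_of_mem hx, norm_mul, Real.norm_of_nonneg (ballRamp_nonneg R c k x)]
      exact mul_le_of_le_one_right (norm_nonneg _) (ballRamp_le_one R c k x)
    · simp [ballRamp_eq_zero_of_notMem hc k hx, hx]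
  · have hsphere : ∀ᵐ x : EuclideanSpace ℝ (Fin 3), x ∉ Metric.sphere 0 R :=
      measure_eq_zero_iff_ae_notMem.1 (Measure.addHaar_sphere volume 0 R)
    filter_upwards [hsphere] with x hx
    have hk : Tendsto (fun k : ℕ => (k : ℝ) + 1) atTop atTop :=
      tendsto_atTop_add_const_right _ _ tendsto_natCast_atTop_atTop
    refine tendsto_const_nhds.congr' ?_
    rcases lt_or_gt_of_ne (show ‖x‖ ≠ R by simpa using hx) with hlt | hgt
    · have hlim := tendsto_atTop_add_const_left _ c (hk.atTop_mul_const (sub_pos.2 hlt))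
      filter_upwards [hlim.eventually_ge_atTop 1] with k hk1
      rw [ballRamp_eq_one hk1, Set.indicator_of_mem (by simpa using hlt), mul_one]
    · have hlim := tendsto_atBot_add_const_left _ c (hk.atTop_mul_const_of_neg (sub_neg.2 hgt))
      filter_upwards [hlim.eventually_le_atBot 0] with k hk0
      rw [ballRamp_eq_zero hk0, Set.indicator_of_notMem (by simpa using hgt.le), mul_zero]

lemma integral_mul_ballRamp_zero_le {h : EuclideanSpace ℝ (Fin 3) → ℝ}
    (hh : LocallyIntegrable h volume) (hpos : ∀ x, 0 ≤ h x) (R : ℝ) (k : ℕ) :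
    ∫ x, h x * ballRamp R 0 k x ≤
      ∫ x in Metric.ball (0 : EuclideanSpace ℝ (Fin 3)) R, h x := by
  rw [← integral_indicator measurableSet_ball]
  refine integral_mono (integrable_mul_ballRamp hh zero_le_one k) (integrable_indicator_ball hh R)
    fun x => ?_
  by_cases hx : x ∈ Metric.ball (0 : EuclideanSpace ℝ (Fin 3)) R
  · simpa [hx] using mul_le_of_le_one_right (hpos x) (ballRamp_le_one R 0 k x)
  · have hR : R ≤ ‖x‖ := by simpa using hx
    have h0 : ballRamp R 0 k x = 0 := ballRamp_eq_zero (by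
      have hk : (0 : ℝ) ≤ k := k.cast_nonneg
      nlinarith)
    simp [hx, h0]

lemma le_integral_mul_ballRamp_one {h : EuclideanSpace ℝ (Fin 3) → ℝ}
    (hh : LocallyIntegrable h volume) (hpos : ∀ x, 0 ≤ h x) (R : ℝ) (k : ℕ) :
    ∫ x in Metric.ball (0 : EuclideanSpace ℝ (Fin 3)) R, h x ≤
      ∫ x, h x * ballRamp R 1 k x := by
  rw [← integral_indicator measurableSet_ball]
  refine integral_mono (integrable_indicator_ball hh R) (integrable_mul_ballRamp hh le_rfl k)
    fun x => ?_
  by_cases hx : x ∈ Metric.ball (0 : EuclideanSpace ℝ (Fin 3)) R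
  · have hR : ‖x‖ < R := by simpa using hx
    have h1 : ballRamp R 1 k x = 1 := ballRamp_eq_one (by
      have hk : (0 : ℝ) ≤ k := k.cast_nonneg
      nlinarith)
    simp [hx, h1]
  · simpa [hx] using mul_nonneg (hpos x) (ballRamp_nonneg R 1 k x)

/-- If `(f_n)` and `f` are nonnegative locally integrable functions on `ℝ³` such that
`∫ f_n φ → ∫ f φ` for every continuous compactly supported `φ`, then for every `R > 0`,
`∫_{B_R} f_n → ∫_{B_R} f`. -/
theorem weak_convergence_on_balls
    (f : ℕ → EuclideanSpace ℝ (Fin 3) → ℝ) (g : EuclideanSpace ℝ (Fin 3) → ℝ)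
    (hf : ∀ n, LocallyIntegrable (f n) volume) (hg : LocallyIntegrable g volume)
    (hfpos : ∀ n x, 0 ≤ f n x) (hgpos : ∀ x, 0 ≤ g x)
    (hconv : ∀ φ : EuclideanSpace ℝ (Fin 3) → ℝ, Continuous φ → HasCompactSupport φ →
      Tendsto (fun n => ∫ x, f n x * φ x) atTop (𝓝 (∫ x, g x * φ x))) :
    ∀ R : ℝ, 0 < R →
      Tendsto (fun n => ∫ x in Metric.ball (0 : EuclideanSpace ℝ (Fin 3)) R, f n x) atTop
        (𝓝 (∫ x in Metric.ball (0 : EuclideanSpace ℝ (Fin 3)) R, g x)) := by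
  intro R _
  refine tendsto_order.2 ⟨fun a ha => ?_, fun a ha => ?_⟩
  · obtain ⟨k, hk⟩ :=
      ((tendsto_integral_mul_ballRamp hg zero_le_one).eventually_const_lt ha).exists
    filter_upwards [(hconv _ (continuous_ballRamp R 0 k)
      (hasCompactSupport_ballRamp zero_le_one k)).eventually_const_lt hk] with n hn
    exact hn.trans_le (integral_mul_ballRamp_zero_le (hf n) (hfpos n) R k)
  · obtain ⟨k, hk⟩ :=
      ((tendsto_integral_mul_ballRamp hg le_rfl).eventually_lt_const ha).exists
    filter_upwards [(hconv _ (continuous_ballRamp R 1 k)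
      (hasCompactSupport_ballRamp le_rfl k)).eventually_lt_const hk] with n hn
    exact (le_integral_mul_ballRamp_one (hf n) (hfpos n) R k).trans_lt hn
end
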